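/- Let a, b, c, d be positive integers with a < b and let A be the matrix with rows (a, b) and (c, d), and suppose A ∈ SL(2,ℤ). If p_1,…,p_k are integers with p_i ≥ 2 for i ∈ {2,…,k} and b/d = [[p_1,…,p_k]], then A = ε·M(p_1,…,p_k,0) for some ε ∈ {1,−1}. -/

import Mathlib

/-- The continuant matrix `M(c)` for an integer `c`. -/
def M (c : ℤ) : Matrix (Fin 2) (Fin 2) ℤ := !![c, -1; 1, 0]

/-- `M(c₁,…,cₙ) := M(c₁)·…·M(cₙ)`. -/
def Mseq (l : List ℤ) : Matrix (Fin 2) (Fin 2) ℤ := (l.map M).prod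

/-- The negative continued fraction `[[q₁,…,q_k]]` of a list of integers,
defined by `[[q_k]] = q_k` and `[[q_i,…,q_k]] = q_i − 1/[[q_{i+1},…,q_k]]`. -/
def ncf : List ℤ → ℚ
  | [] => 0
  | [q] => (q : ℚ)
  | q :: l => (q : ℚ) - 1 / ncf l

theorem ncf_cons (q : ℤ) (l : List ℤ) : ncf (q :: l) = (q : ℚ) - 1 / ncf l := by
  cases l with
  | nil => simp [ncf]
  | cons x t => rw [ncf]; simp

theorem Mseq_cons (q : ℤ) (l : List ℤ) : Mseq (q :: l) = M q * Mseq l := by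
  simp [Mseq]

theorem tail_lemma (l : List ℤ) (h : ∀ x ∈ l, 2 ≤ x) :
    ∃ P P' Q Q' : ℤ, Mseq l = !![P, -P'; Q, -Q'] ∧ 0 ≤ Q ∧ Q < P ∧ 0 ≤ P' ∧ Q' ≤ P' ∧
      0 ≤ Q - Q' ∧ Q - Q' ≤ P - P' ∧ P' * Q - P * Q' = 1 ∧ 1 / ncf l = (Q : ℚ) / P := by
  induction l with
  | nil =>
    refine ⟨1, 0, 0, -1, ?_, ?_⟩
    · simp [Mseq, Matrix.one_fin_two]
    · simp [ncf]
  | cons q l ih =>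
    obtain ⟨P, P', Q, Q', hM, h1, h2, h3, h4, h5, h6, h7, h8⟩ :=
      ih (fun x hx => h x (by simp [hx]))
    have hq : 2 ≤ q := h q (by simp)
    refine ⟨q * P - Q, q * P' - Q', P, P', ?_, by linarith, by nlinarith, by nlinarith,
      by nlinarith, by linarith, by nlinarith, by linarith, ?_⟩
    · rw [Mseq_cons, hM, M]
      ext i j
      fin_cases i <;> fin_cases j <;> simp [Matrix.mul_apply, Fin.sum_univ_two] <;> ring
    · rw [ncf_cons, h8]
      have hP : (P : ℚ) ≠ 0 := by
        have : P ≠ 0 := by linarith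
        exact_mod_cast this
      have : (q : ℚ) - Q / P = (q * P - Q) / P := by field_simp
      rw [this, one_div_div]
      push_cast
      rfl

/-- Let `a, b, c, d` be positive integers with `a < b` and suppose the matrix
`A = !![a, b; c, d]` has determinant `1`. If `p₁,…,p_k` are integers with `pᵢ ≥ 2`
for `i ∈ {2,…,k}` and `b/d = [[p₁,…,p_k]]`, then `A = ε·M(p₁,…,p_k,0)` for some
`ε ∈ {1,−1}`. -/
theorem presentation_of_pos_entries (a b c d : ℤ)
    (ha : 0 < a) (hb : 0 < b) (hc : 0 < c) (hd : 0 < d) (hab : a < b)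
    (hdet : a * d - b * c = 1)
    (p : List ℤ) (hp : p ≠ [])
    (hp2 : ∀ i, 1 ≤ i → i < p.length → 2 ≤ p.getD i 0)
    (hncf : ncf p = (b : ℚ) / (d : ℚ)) :
    ∃ ε : ℤ, (ε = 1 ∨ ε = -1) ∧ !![a, b; c, d] = ε • Mseq (p ++ [0]) := by
  obtain ⟨q, l, rfl⟩ := List.exists_cons_of_ne_nil hp
  have hl : ∀ x ∈ l, 2 ≤ x := by
    intro x hx
    obtain ⟨i, hi, rfl⟩ := List.getElem_of_mem hx
    have := hp2 (i + 1) (by omega) (by simpa using hi)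
    simpa [List.getD_eq_getElem?_getD, hi] using this
  obtain ⟨T, T', U, U', hM, h1, h2, h3, h4, h5, h6, h7, h8⟩ := tail_lemma l hl
  have hT : 0 < T := by linarith
  have hTq : (T : ℚ) ≠ 0 := by exact_mod_cast hT.ne'
  have hdq : (d : ℚ) ≠ 0 := by exact_mod_cast hd.ne'
  rw [ncf_cons, h8] at hncf
  have e : (q * T - U) * d = b * T := by
    have : ((q : ℚ) * T - U) * d = b * T := by
      field_simp at hncf
      linarith
    exact_mod_cast this
  have hP : 0 < q * T - U := by
    have : 0 < (q * T - U) * d := by rw [e]; positivity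
    exact pos_of_mul_pos_left this hd.le
  have hq : 1 ≤ q := by
    by_contra hcon
    have : q ≤ 0 := by omega
    nlinarith
  obtain ⟨P, hPd⟩ : ∃ P, P = q * T - U := ⟨_, rfl⟩
  obtain ⟨P', hPd'⟩ : ∃ P', P' = q * T' - U' := ⟨_, rfl⟩
  have hP0 : 0 ≤ P' := by nlinarith
  have hP1 : P' ≤ P := by nlinarith
  have hdet2 : P' * T - P * T' = 1 := by rw [hPd, hPd']; linarith
  rw [← hPd] at e hP
  have hbP : b = P := by
    apply Int.dvd_antisymm hb.le hP.le
    · exact ⟨a * T - c * P, by linear_combination (-P) * hdet + a * e⟩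
    · exact ⟨d * P' - b * T', by linear_combination (-b) * hdet2 - P' * e⟩
  subst hbP
  have hdT : d = T := mul_left_cancel₀ hb.ne' e
  subst hdT
  have ht : a - P' = b * (a * (c - T') - c * (a - P')) := by
    linear_combination (-(a - P')) * hdet + a * (hdet - hdet2)
  have haP : a - P' = 0 :=
    Int.eq_zero_of_abs_lt_dvd ⟨_, ht⟩ (by rw [abs_lt]; constructor <;> omega)
  have haP' : P' = a := by omega
  have hcT : T' = c := by
    apply mul_left_cancel₀ hb.ne'
    rw [haP'] at hdet2
    linarith
  refine ⟨-1, Or.inr rfl, ?_⟩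
  have hs : Mseq (q :: l ++ [0]) = M q * Mseq l * M 0 := by
    simp [Mseq, mul_assoc]
  rw [hs, hM, M, M]
  ext i j
  fin_cases i <;> fin_cases j <;> simp [Matrix.mul_apply, Fin.sum_univ_two] <;> linarith
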